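/- arXiv:1510.05274 — 2 statements merged into one kernel-verified Lean document; each statement's English description precedes it below -/
import Mathlib

section
/- Let α₀ > 0, β₀ > 0 and λ > 0, and let (φ,ψ) ∈ H¹(ℝ)×H¹(ℝ) be a minimizer, i.e. ∫_ℝ φ² ψ dx = λ and I(φ,ψ) = M_λ. If φ and ψ are twice continuously differentiable, then there exists a Lagrange multiplier κ ∈ ℝ such that −φ″(x) + α₀ φ(x) = κ φ(x) ψ(x) and −ψ″(x) + β₀ ψ(x) = (κ/2) φ(x)² for all x ∈ ℝ. -/
/-!
Since `I` is homogeneous of degree 2 and `(f, g) ↦ ∫ f² g` of degree 3, rescaling an arbitrary pair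
with `c = ∫ f² g` of the sign of `λ` to an admissible one gives `M_λ (c / λ)^(2/3) ≤ I(f, g)`, with
equality at a minimizer. Differentiating along `φ + s η`, and along `ψ + s ζ`, turns this
unconstrained inequality into the weak Euler–Lagrange system with multiplier `κ = 2 M_λ / (3 λ)`.
By the du Bois-Reymond lemma `φ'` and `ψ'` are primitives of continuous functions, so the system
holds pointwise and `φ`, `ψ` are automatically of class `C²`.
-/

open MeasureTheory Filter Topology

noncomputable section

/-- Membership in `H¹(ℝ)`: `f` is differentiable with `f` and `f'` square-integrable. -/
def InH1 (f : ℝ → ℝ) : Prop :=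
  Differentiable ℝ f ∧ Integrable (fun x => f x ^ 2) ∧ Integrable (fun x => deriv f x ^ 2)

/-- The functional `I(f,g) = ∫ (f'² + g'² + α₀ f² + β₀ g²)`. -/
def Ifun (α₀ β₀ : ℝ) (f g : ℝ → ℝ) : ℝ :=
  ∫ x : ℝ, (deriv f x ^ 2 + deriv g x ^ 2 + α₀ * f x ^ 2 + β₀ * g x ^ 2)

/-- The set of values `I(f,g)` over pairs in `H¹ × H¹` with `∫ f² g = lam`. -/
def IvalSet (α₀ β₀ lam : ℝ) : Set ℝ :=
  {m | ∃ f g : ℝ → ℝ, InH1 f ∧ InH1 g ∧ (∫ x : ℝ, f x ^ 2 * g x) = lam ∧ Ifun α₀ β₀ f g = m}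

/-- `M_lam`, the infimum of `I` subject to the constraint `∫ f² g = lam`. -/
def Mfun (α₀ β₀ lam : ℝ) : ℝ := sInf (IvalSet α₀ β₀ lam)

open scoped ContDiff

section DuBoisReymond

variable {E : Type*} [NormedAddCommGroup E] [NormedSpace ℝ E]

lemma exists_contDiff_hasCompactSupport_deriv_eq [CompleteSpace E] {ζ : ℝ → E}
    (hζ : ContDiff ℝ ∞ ζ) (hζs : HasCompactSupport ζ) (hζ0 : ∫ x, ζ x = 0) :
    ∃ η : ℝ → E, ContDiff ℝ ∞ η ∧ HasCompactSupport η ∧ deriv η = ζ := by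
  obtain ⟨R, hR⟩ := hζs.isCompact.isBounded.subset_closedBall 0
  rw [Real.closedBall_zero_eq_Icc] at hR
  have hvanish {x : ℝ} (hx : x ∉ Set.Icc (-R) R) : ζ x = 0 :=
    image_eq_zero_of_notMem_tsupport fun h => hx (hR h)
  let η : ℝ → E := fun x => ∫ t in (-R - 1)..x, ζ t
  have hderiv : deriv η = ζ := funext fun x => hζ.continuous.deriv_integral _ _ x
  have hdiff : Differentiable ℝ η := fun x =>
    (hζ.continuous.integral_hasStrictDerivAt _ x).hasDerivAt.differentiableAt
  refine ⟨η, contDiff_infty_iff_deriv.2 ⟨hdiff, hderiv ▸ hζ⟩, ?_, hderiv⟩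
  refine HasCompactSupport.intro (isCompact_Icc (a := -R) (b := R)) fun x hx => ?_
  rw [Set.mem_Icc, not_and_or, not_le, not_le] at hx
  rcases hx with hleft | hright
  · refine intervalIntegral.integral_zero_ae (ae_of_all _ fun t ht => hvanish fun h => ?_)
    rcases Set.mem_uIoc.1 ht with ht | ht <;> linarith [ht.2, h.1]
  · rw [← hζ0]
    refine intervalIntegral.integral_eq_integral_of_support_subset fun t ht => ?_
    have htR : t ∈ Set.Icc (-R) R := by_contra fun h => ht (hvanish h)
    exact ⟨by linarith [htR.1], by linarith [htR.2]⟩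

lemma exists_ae_eq_const_of_integral_deriv_smul_eq_zero [CompleteSpace E] {v : ℝ → E}
    (hv : LocallyIntegrable v)
    (h : ∀ η : ℝ → ℝ, ContDiff ℝ ∞ η → HasCompactSupport η → ∫ x, deriv η x • v x = 0) :
    ∃ c : E, ∀ᵐ x, v x = c := by
  let χ : ContDiffBump (0 : ℝ) := default
  let ρ : ℝ → ℝ := χ.normed volume
  have hρ : ContDiff ℝ ∞ ρ := χ.contDiff_normed
  have hρs : HasCompactSupport ρ := χ.hasCompactSupport_normed
  let c : E := ∫ x, ρ x • v x
  refine ⟨c, ae_eq_of_integral_contDiff_smul_eq hv (locallyIntegrable_const c)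
    fun ζ hζ hζs => ?_⟩
  have hiζ : Integrable ζ := hζ.continuous.integrable_of_hasCompactSupport hζs
  have hiρ : Integrable ρ := χ.integrable_normed
  let m : ℝ := ∫ x, ζ x
  -- Subtracting from `ζ` its mass times a unit bump leaves the derivative of a test function.
  obtain ⟨η, hη, hηs, hη'⟩ := exists_contDiff_hasCompactSupport_deriv_eq
    (ζ := fun x => ζ x - m * ρ x) (hζ.sub (contDiff_const.mul hρ))
    (hζs.sub hρs.mul_left)
    (by rw [integral_sub hiζ (hiρ.const_mul m), integral_const_mul, χ.integral_normed]; simp [m])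
  have hiζv : Integrable fun x => ζ x • v x :=
    hv.integrable_smul_left_of_hasCompactSupport hζ.continuous hζs
  have hiρv : Integrable fun x => ρ x • v x :=
    hv.integrable_smul_left_of_hasCompactSupport hρ.continuous hρs
  have key := h η hη hηs
  simp only [hη', sub_smul, mul_smul] at key
  rw [integral_sub hiζv (hiρv.fun_smul m), integral_smul, sub_eq_zero] at key
  rw [key, integral_smul_const]

lemma integral_deriv_smul_add_smul_deriv_eq_zero {η : ℝ → ℝ} {W : ℝ → E}
    (hη : ContDiff ℝ 1 η) (hηs : HasCompactSupport η) (hW : ContDiff ℝ 1 W) :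
    ∫ x, (deriv η x • W x + η x • deriv W x) = 0 := by
  have hη' : Continuous (deriv η) := hη.continuous_deriv le_rfl
  have hW' : Continuous (deriv W) := hW.continuous_deriv le_rfl
  refine integral_eq_zero_of_hasDerivAt_of_integrable (f := fun x => η x • W x) (fun x => ?_)
    (((hη'.smul hW.continuous).integrable_of_hasCompactSupport hηs.deriv.smul_right).add
      ((hη.continuous.smul hW').integrable_of_hasCompactSupport hηs.smul_right))
    ((hη.continuous.smul hW.continuous).integrable_of_hasCompactSupport hηs.smul_right)
  rw [add_comm]
  exact (hη.differentiable one_ne_zero x).hasDerivAt.smul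
    (hW.differentiable one_ne_zero x).hasDerivAt

lemma deriv_eq_of_ae_eq [CompleteSpace E] {u v : ℝ → E} (hu : Differentiable ℝ u)
    (hv : Continuous v) (h : ∀ᵐ x, deriv u x = v x) : deriv u = v := by
  have hprim : u = fun x => u 0 + ∫ t in (0 : ℝ)..x, v t := funext fun x => by
    have hint : IntervalIntegrable (deriv u) volume 0 x :=
      (hv.intervalIntegrable 0 x).congr_ae (ae_restrict_of_ae (h.mono fun _ ht => ht.symm))
    rw [← intervalIntegral.integral_congr_ae (h.mono fun t ht _ => ht),
      intervalIntegral.integral_deriv_eq_sub (fun t _ => hu t) hint]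
    abel
  rw [hprim]
  exact funext fun x => by rw [deriv_const_add, hv.deriv_integral]

lemma hasDerivAt_deriv_of_integral_eq_zero [CompleteSpace E] {u w : ℝ → E}
    (hu : Differentiable ℝ u) (hu' : LocallyIntegrable (deriv u)) (hw : Continuous w)
    (h : ∀ η : ℝ → ℝ, ContDiff ℝ ∞ η → HasCompactSupport η →
      ∫ x, (deriv η x • deriv u x + η x • w x) = 0) (x : ℝ) :
    HasDerivAt (deriv u) (w x) x := by
  let W : ℝ → E := fun x => ∫ t in (0 : ℝ)..x, w t
  have hW (x : ℝ) : HasDerivAt W (w x) x := (hw.integral_hasStrictDerivAt 0 x).hasDerivAt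
  have hW' : deriv W = w := funext fun x => (hW x).deriv
  have hW1 : ContDiff ℝ 1 W :=
    contDiff_one_iff_deriv.2 ⟨fun x => (hW x).differentiableAt, hW' ▸ hw⟩
  obtain ⟨c, hc⟩ := exists_ae_eq_const_of_integral_deriv_smul_eq_zero
    (hu'.sub hW1.continuous.locallyIntegrable) fun η hη hηs => by
      have hη1 : ContDiff ℝ 1 η := hη.of_le (by exact_mod_cast le_top)
      have hη' : Continuous (deriv η) := hη1.continuous_deriv le_rfl
      have hiu : Integrable fun x => deriv η x • deriv u x :=
        hu'.integrable_smul_left_of_hasCompactSupport hη' hηs.deriv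
      have hiw : Integrable fun x => η x • w x :=
        (hη.continuous.smul hw).integrable_of_hasCompactSupport hηs.smul_right
      have hiW : Integrable fun x => deriv η x • W x :=
        (hη'.smul hW1.continuous).integrable_of_hasCompactSupport hηs.deriv.smul_right
      have hparts := integral_deriv_smul_add_smul_deriv_eq_zero hη1 hηs hW1
      have hweak := h η hη hηs
      rw [hW', integral_add hiW hiw] at hparts
      rw [integral_add hiu hiw] at hweak
      simp only [Pi.sub_apply, smul_sub]
      rw [integral_sub hiu hiW, eq_neg_of_add_eq_zero_left hweak,
        eq_neg_of_add_eq_zero_left hparts, sub_self]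
  have hderiv : deriv u = fun x => W x + c :=
    deriv_eq_of_ae_eq hu (hW1.continuous.add continuous_const)
      (hc.mono fun x hx => by rw [← hx, Pi.sub_apply]; abel)
  rw [hderiv]
  exact (hW x).add_const c

end DuBoisReymond

namespace InH1

variable {f g h : ℝ → ℝ}

lemma continuous (hf : InH1 f) : Continuous f := hf.1.continuous

lemma memLp (hf : InH1 f) : MemLp f 2 :=
  (memLp_two_iff_integrable_sq hf.continuous.aestronglyMeasurable).2 hf.2.1

lemma memLp_deriv (hf : InH1 f) : MemLp (deriv f) 2 :=
  (memLp_two_iff_integrable_sq (aestronglyMeasurable_deriv f _)).2 hf.2.2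

lemma of_memLp (hf : Differentiable ℝ f) (hf2 : MemLp f 2) (hf2' : MemLp (deriv f) 2) :
    InH1 f :=
  ⟨hf, hf2.integrable_sq, hf2'.integrable_sq⟩

lemma add (hf : InH1 f) (hg : InH1 g) : InH1 (f + g) := by
  refine of_memLp (hf.1.add hg.1) (hf.memLp.add hg.memLp) ?_
  have : deriv (f + g) = deriv f + deriv g := funext fun x => deriv_add (hf.1 x) (hg.1 x)
  exact this ▸ hf.memLp_deriv.add hg.memLp_deriv

lemma const_smul (hf : InH1 f) (s : ℝ) : InH1 (s • f) := by
  refine of_memLp (hf.1.const_smul s) (hf.memLp.const_smul s) ?_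
  have : deriv (s • f) = s • deriv f := funext fun x => deriv_const_smul s (hf.1 x)
  exact this ▸ hf.memLp_deriv.const_smul s

lemma of_contDiff_of_hasCompactSupport {n : WithTop ℕ∞} (hn : 1 ≤ n) (hf : ContDiff ℝ n f)
    (hfs : HasCompactSupport f) : InH1 f :=
  of_memLp (hf.differentiable (one_pos.trans_le hn).ne')
    (hf.continuous.memLp_of_hasCompactSupport hfs)
    ((hf.continuous_deriv hn).memLp_of_hasCompactSupport hfs.deriv)

lemma integrable_mul (hf : InH1 f) (hg : InH1 g) : Integrable fun x => f x * g x :=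
  hf.memLp.integrable_mul hg.memLp

lemma integrable_deriv_mul_deriv (hf : InH1 f) (hg : InH1 g) :
    Integrable fun x => deriv f x * deriv g x :=
  hf.memLp_deriv.integrable_mul hg.memLp_deriv

lemma exists_forall_norm_le (hf : InH1 f) : ∃ C, ∀ x, ‖f x‖ ≤ C := by
  -- `f² = f(0)² + ∫ (f²)'`, and `(f²)' = 2 f f'` is integrable.
  let q : ℝ → ℝ := fun x => 2 * (f x * deriv f x)
  have hq : Integrable q := (hf.memLp.integrable_mul hf.memLp_deriv).const_mul 2
  have hderiv (x : ℝ) : HasDerivAt (fun y => f y ^ 2) (q x) x := by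
    simpa [q, mul_assoc] using (hf.1 x).hasDerivAt.fun_pow 2
  refine ⟨√(f 0 ^ 2 + ∫ x, ‖q x‖), fun x => Real.abs_le_sqrt ?_⟩
  have hftc : ∫ t in (0 : ℝ)..x, q t = f x ^ 2 - f 0 ^ 2 :=
    intervalIntegral.integral_eq_sub_of_hasDerivAt (fun t _ => hderiv t) hq.intervalIntegrable
  have hle : ∫ t in (0 : ℝ)..x, q t ≤ ∫ t, ‖q t‖ :=
    calc ∫ t in (0 : ℝ)..x, q t
        ≤ ∫ t in Set.uIoc 0 x, ‖q t‖ :=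
          (Real.le_norm_self _).trans intervalIntegral.norm_integral_le_integral_norm_uIoc
      _ ≤ ∫ t, ‖q t‖ := setIntegral_le_integral hq.norm (ae_of_all _ fun t => norm_nonneg _)
  linarith

lemma integrable_mul_mul (hf : InH1 f) (hg : InH1 g) (hh : InH1 h) :
    Integrable fun x => f x * g x * h x := by
  obtain ⟨C, hC⟩ := hh.exists_forall_norm_le
  exact (hf.integrable_mul hg).mul_bdd hh.continuous.aestronglyMeasurable (ae_of_all _ hC)

lemma integrable_sq_mul (hf : InH1 f) (hg : InH1 g) : Integrable fun x => f x ^ 2 * g x := by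
  simpa only [sq] using hf.integrable_mul_mul hf hg

end InH1

/-- The inner product `∫ (f' g' + α f g)` of `H¹(ℝ)` with weight `α`: the polarization of each of
the two quadratic forms that make up `I`. -/
def h1Inner (α : ℝ) (f g : ℝ → ℝ) : ℝ := ∫ x : ℝ, (deriv f x * deriv g x + α * (f x * g x))

lemma InH1.integrable_h1Inner {f g : ℝ → ℝ} (hf : InH1 f) (hg : InH1 g) (α : ℝ) :
    Integrable fun x => deriv f x * deriv g x + α * (f x * g x) :=
  (hf.integrable_deriv_mul_deriv hg).add ((hf.integrable_mul hg).const_mul α)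

lemma InH1.contDiff_two_and_eq_of_weak {u N : ℝ → ℝ} {α : ℝ} (hu : InH1 u) (hN : Continuous N)
    (h : ∀ η : ℝ → ℝ, ContDiff ℝ ∞ η → HasCompactSupport η →
      h1Inner α u η = ∫ x, N x * η x) :
    ContDiff ℝ 2 u ∧ ∀ x, -(deriv (deriv u) x) + α * u x = N x := by
  have hw : Continuous fun x => α * u x - N x := (hu.continuous.const_mul α).sub hN
  have hu'' := hasDerivAt_deriv_of_integral_eq_zero hu.1
    (hu.memLp_deriv.locallyIntegrable one_le_two) hw fun η hη hηs => by
      have hηH : InH1 η := .of_contDiff_of_hasCompactSupport (by simp) hη hηs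
      have hiN : Integrable fun x => N x * η x :=
        (hN.mul hη.continuous).integrable_of_hasCompactSupport hηs.mul_left
      rw [← sub_eq_zero.2 (h η hη hηs), h1Inner,
        ← integral_sub (hu.integrable_h1Inner hηH α) hiN]
      refine integral_congr_ae (ae_of_all _ fun x => ?_)
      simp only [smul_eq_mul]
      ring
  have hderiv : deriv (deriv u) = fun x => α * u x - N x := funext fun x => (hu'' x).deriv
  refine ⟨?_, fun x => by rw [hderiv]; ring⟩
  have hC1 : ContDiff ℝ 1 (deriv u) :=
    contDiff_one_iff_deriv.2 ⟨fun x => (hu'' x).differentiableAt, hderiv ▸ hw⟩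
  rw [← one_add_one_eq_two, contDiff_succ_iff_deriv]
  exact ⟨hu.1, by simp, hC1⟩

lemma Ifun_eq_h1Inner_add_h1Inner {f g : ℝ → ℝ} (hf : InH1 f) (hg : InH1 g) (α β : ℝ) :
    Ifun α β f g = h1Inner α f f + h1Inner β g g := by
  rw [Ifun, h1Inner, h1Inner,
    ← integral_add (hf.integrable_h1Inner hf α) (hg.integrable_h1Inner hg β)]
  exact integral_congr_ae (ae_of_all _ fun x => by ring)

lemma h1Inner_add_smul_self {f η : ℝ → ℝ} (hf : InH1 f) (hη : InH1 η) (α s : ℝ) :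
    h1Inner α (f + s • η) (f + s • η) =
      h1Inner α f f + s * (2 * h1Inner α f η) + s ^ 2 * h1Inner α η η := by
  have hff := hf.integrable_h1Inner hf α
  have hfη := ((hf.integrable_h1Inner hη α).const_mul 2).const_mul s
  have hηη := (hη.integrable_h1Inner hη α).const_mul (s ^ 2)
  simp only [h1Inner]
  rw [← integral_const_mul, ← integral_const_mul, ← integral_const_mul,
    ← integral_add hff hfη, ← integral_add (hff.fun_add hfη) hηη]
  refine integral_congr_ae (ae_of_all _ fun x => ?_)
  have hderiv : deriv (f + s • η) x = deriv f x + s * deriv η x := by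
    rw [deriv_add (hf.1 x) ((hη.1 x).const_smul s), deriv_const_smul s (hη.1 x), smul_eq_mul]
  simp only [hderiv, Pi.add_apply, Pi.smul_apply, smul_eq_mul]
  ring

lemma hasDerivAt_quadratic_zero (a b c : ℝ) :
    HasDerivAt (fun s : ℝ => a + s * b + s ^ 2 * c) b 0 := by
  simpa using (((hasDerivAt_id (0 : ℝ)).mul_const b).const_add a).fun_add
    ((hasDerivAt_pow 2 (0 : ℝ)).mul_const c)

lemma hasDerivAt_h1Inner_add_smul_self {f η : ℝ → ℝ} (hf : InH1 f) (hη : InH1 η) (α : ℝ) :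
    HasDerivAt (fun s : ℝ => h1Inner α (f + s • η) (f + s • η)) (2 * h1Inner α f η) 0 := by
  simp only [h1Inner_add_smul_self hf hη]
  exact hasDerivAt_quadratic_zero _ _ _

lemma hasDerivAt_integral_sq_mul_left {f g η : ℝ → ℝ} (hf : InH1 f) (hg : InH1 g)
    (hη : InH1 η) :
    HasDerivAt (fun s : ℝ => ∫ x, (f + s • η) x ^ 2 * g x) (2 * ∫ x, f x * g x * η x) 0 := by
  have hexpand (s : ℝ) : ∫ x, (f + s • η) x ^ 2 * g x =
      (∫ x, f x ^ 2 * g x) + s * (2 * ∫ x, f x * g x * η x) + s ^ 2 * ∫ x, η x ^ 2 * g x := by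
    have hff := hf.integrable_sq_mul hg
    have hfη := ((hf.integrable_mul_mul hg hη).const_mul 2).const_mul s
    have hηη := (hη.integrable_sq_mul hg).const_mul (s ^ 2)
    rw [← integral_const_mul, ← integral_const_mul, ← integral_const_mul,
      ← integral_add hff hfη, ← integral_add (hff.fun_add hfη) hηη]
    refine integral_congr_ae (ae_of_all _ fun x => ?_)
    simp only [Pi.add_apply, Pi.smul_apply, smul_eq_mul]
    ring
  simp only [hexpand]
  exact hasDerivAt_quadratic_zero _ _ _

lemma hasDerivAt_integral_sq_mul_right {f g ζ : ℝ → ℝ} (hf : InH1 f) (hg : InH1 g)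
    (hζ : InH1 ζ) :
    HasDerivAt (fun s : ℝ => ∫ x, f x ^ 2 * (g + s • ζ) x) (∫ x, f x ^ 2 * ζ x) 0 := by
  have hexpand (s : ℝ) : ∫ x, f x ^ 2 * (g + s • ζ) x =
      (∫ x, f x ^ 2 * g x) + s * ∫ x, f x ^ 2 * ζ x := by
    rw [← integral_const_mul,
      ← integral_add (hf.integrable_sq_mul hg) ((hf.integrable_sq_mul hζ).const_mul s)]
    refine integral_congr_ae (ae_of_all _ fun x => ?_)
    simp only [Pi.add_apply, Pi.smul_apply, smul_eq_mul]
    ring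
  simp only [hexpand]
  simpa using ((hasDerivAt_id (0 : ℝ)).mul_const (∫ x, f x ^ 2 * ζ x)).const_add
    (∫ x, f x ^ 2 * g x)

lemma Ifun_smul (α β t : ℝ) (f g : ℝ → ℝ) :
    Ifun α β (t • f) (t • g) = t ^ 2 * Ifun α β f g := by
  rw [Ifun, Ifun, ← integral_const_mul]
  refine integral_congr_ae (ae_of_all _ fun x => ?_)
  simp only [deriv_const_smul_field, Pi.smul_apply, smul_eq_mul]
  ring

lemma integral_sq_mul_smul (t : ℝ) (f g : ℝ → ℝ) :
    ∫ x, (t • f) x ^ 2 * (t • g) x = t ^ 3 * ∫ x, f x ^ 2 * g x := by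
  rw [← integral_const_mul]
  refine integral_congr_ae (ae_of_all _ fun x => ?_)
  simp only [Pi.smul_apply, smul_eq_mul]
  ring

lemma deriv_eq_of_eventually_mul_rpow_le {J C : ℝ → ℝ} {J' C' a p : ℝ}
    (hJ : HasDerivAt J J' a) (hC : HasDerivAt C C' a) (hCa : C a ≠ 0)
    (h : ∀ᶠ s in 𝓝 a, J a * (C s / C a) ^ p ≤ J s) :
    J' = p * J a / C a * C' := by
  have hpow : HasDerivAt (fun s => (C s / C a) ^ p) (C' / C a * p) a := by
    simpa [hCa] using (hC.div_const (C a)).rpow_const (p := p) (Or.inl (by simp [hCa]))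
  have hmin : IsLocalMin (fun s => J s - J a * (C s / C a) ^ p) a := by
    filter_upwards [h] with s hs
    simpa [hCa] using hs
  have hzero := hmin.hasDerivAt_eq_zero (hJ.sub (hpow.const_mul (J a)))
  rw [sub_eq_zero.1 hzero]
  ring

section Minimizer

variable {α₀ β₀ lam : ℝ} {φ ψ f g η ζ : ℝ → ℝ}

lemma Mfun_le_Ifun (hα : 0 ≤ α₀) (hβ : 0 ≤ β₀) (hf : InH1 f) (hg : InH1 g) :
    Mfun α₀ β₀ (∫ x, f x ^ 2 * g x) ≤ Ifun α₀ β₀ f g := by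
  refine csInf_le ⟨0, ?_⟩ ⟨f, g, hf, hg, rfl, rfl⟩
  rintro _ ⟨u, v, -, -, -, rfl⟩
  exact integral_nonneg fun x => by positivity

lemma Mfun_mul_rpow_le_Ifun (hα : 0 ≤ α₀) (hβ : 0 ≤ β₀) (hf : InH1 f) (hg : InH1 g)
    (hpos : 0 < (∫ x, f x ^ 2 * g x) / lam) :
    Mfun α₀ β₀ lam * ((∫ x, f x ^ 2 * g x) / lam) ^ (2 / 3 : ℝ) ≤ Ifun α₀ β₀ f g := by
  set q : ℝ := (∫ x, f x ^ 2 * g x) / lam with hq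
  set r : ℝ := q ^ (1 / 3 : ℝ) with hr
  have hr0 : 0 < r := Real.rpow_pos_of_pos hpos _
  have hr2 : q ^ (2 / 3 : ℝ) = r ^ 2 := by
    rw [hr, ← Real.rpow_mul_natCast hpos.le]; norm_num
  have hr3 : r ^ 3 = q := by
    rw [hr, ← Real.rpow_mul_natCast hpos.le]; norm_num
  have hadm : ∫ x, (r⁻¹ • f) x ^ 2 * (r⁻¹ • g) x = lam := by
    have hint : ∫ x, f x ^ 2 * g x ≠ 0 := fun h0 => by simp [hq, h0] at hpos
    rw [integral_sq_mul_smul, inv_pow, hr3, hq, inv_div, div_mul_cancel₀ _ hint]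
  have hle : Mfun α₀ β₀ lam ≤ r⁻¹ ^ 2 * Ifun α₀ β₀ f g := by
    simpa only [hadm, Ifun_smul] using
      Mfun_le_Ifun hα hβ (hf.const_smul r⁻¹) (hg.const_smul r⁻¹)
  calc Mfun α₀ β₀ lam * q ^ (2 / 3 : ℝ)
      ≤ r⁻¹ ^ 2 * Ifun α₀ β₀ f g * r ^ 2 := by rw [hr2]; gcongr
    _ = Ifun α₀ β₀ f g := by field_simp

/-- `(φ, ψ)` is a minimizer of `I` over `H¹ × H¹` under the constraint `∫ f² g = lam`: an admissible
pair at which `I` attains `M_lam`. -/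
structure IsConstrainedMinimizer (α₀ β₀ lam : ℝ) (φ ψ : ℝ → ℝ) : Prop where
  fst_mem : InH1 φ
  snd_mem : InH1 ψ
  constraint : ∫ x, φ x ^ 2 * ψ x = lam
  Ifun_eq : Ifun α₀ β₀ φ ψ = Mfun α₀ β₀ lam

/-- The Lagrange multiplier of the constrained problem; it does not depend on the minimizer. The
factor `2 / 3` is the ratio of the degrees of homogeneity of `I` and of the constraint. -/
def lagrangeMultiplier (α₀ β₀ lam : ℝ) : ℝ := 2 / 3 * Mfun α₀ β₀ lam / lam

namespace IsConstrainedMinimizer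

lemma deriv_Ifun_eq (h : IsConstrainedMinimizer α₀ β₀ lam φ ψ) (hα : 0 ≤ α₀) (hβ : 0 ≤ β₀)
    (hlam : lam ≠ 0) {F G : ℝ → ℝ → ℝ} {J' C' : ℝ} (hF : ∀ s, InH1 (F s))
    (hG : ∀ s, InH1 (G s)) (hF0 : F 0 = φ) (hG0 : G 0 = ψ)
    (hJ : HasDerivAt (fun s => Ifun α₀ β₀ (F s) (G s)) J' 0)
    (hC : HasDerivAt (fun s => ∫ x, F s x ^ 2 * G s x) C' 0) :
    J' = lagrangeMultiplier α₀ β₀ lam * C' := by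
  have hC0 : ∫ x, F 0 x ^ 2 * G 0 x = lam := by rw [hF0, hG0, h.constraint]
  have hJ0 : Ifun α₀ β₀ (F 0) (G 0) = Mfun α₀ β₀ lam := by rw [hF0, hG0, h.Ifun_eq]
  have hpos : ∀ᶠ s in 𝓝 (0 : ℝ), 0 < (∫ x, F s x ^ 2 * G s x) / lam :=
    (hC.div_const lam).continuousAt.eventually (lt_mem_nhds (by simp [hC0, hlam]))
  have hle : ∀ᶠ s in 𝓝 (0 : ℝ), Ifun α₀ β₀ (F 0) (G 0) *
      ((∫ x, F s x ^ 2 * G s x) / ∫ x, F 0 x ^ 2 * G 0 x) ^ (2 / 3 : ℝ) ≤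
        Ifun α₀ β₀ (F s) (G s) := by
    filter_upwards [hpos] with s hs
    rw [hJ0, hC0]
    exact Mfun_mul_rpow_le_Ifun hα hβ (hF s) (hG s) hs
  simpa only [hJ0, hC0, lagrangeMultiplier] using
    deriv_eq_of_eventually_mul_rpow_le hJ hC (hC0.trans_ne hlam) hle

lemma h1Inner_fst (h : IsConstrainedMinimizer α₀ β₀ lam φ ψ) (hα : 0 ≤ α₀) (hβ : 0 ≤ β₀)
    (hlam : lam ≠ 0) (hη : InH1 η) :
    h1Inner α₀ φ η = lagrangeMultiplier α₀ β₀ lam * ∫ x, φ x * ψ x * η x := by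
  have hF (s : ℝ) : InH1 (φ + s • η) := h.fst_mem.add (hη.const_smul s)
  have hJ : HasDerivAt (fun s : ℝ => Ifun α₀ β₀ (φ + s • η) ψ) (2 * h1Inner α₀ φ η) 0 := by
    simp only [Ifun_eq_h1Inner_add_h1Inner (hF _) h.snd_mem]
    exact (hasDerivAt_h1Inner_add_smul_self h.fst_mem hη α₀).add_const _
  have hC := hasDerivAt_integral_sq_mul_left h.fst_mem h.snd_mem hη
  linarith [h.deriv_Ifun_eq hα hβ hlam hF (fun _ => h.snd_mem) (by simp) rfl hJ hC]

lemma h1Inner_snd (h : IsConstrainedMinimizer α₀ β₀ lam φ ψ) (hα : 0 ≤ α₀) (hβ : 0 ≤ β₀)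
    (hlam : lam ≠ 0) (hζ : InH1 ζ) :
    h1Inner β₀ ψ ζ = lagrangeMultiplier α₀ β₀ lam / 2 * ∫ x, φ x ^ 2 * ζ x := by
  have hG (s : ℝ) : InH1 (ψ + s • ζ) := h.snd_mem.add (hζ.const_smul s)
  have hJ : HasDerivAt (fun s : ℝ => Ifun α₀ β₀ φ (ψ + s • ζ)) (2 * h1Inner β₀ ψ ζ) 0 := by
    simp only [Ifun_eq_h1Inner_add_h1Inner h.fst_mem (hG _)]
    exact (hasDerivAt_h1Inner_add_smul_self h.snd_mem hζ β₀).const_add _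
  have hC := hasDerivAt_integral_sq_mul_right h.fst_mem h.snd_mem hζ
  linarith [h.deriv_Ifun_eq hα hβ hlam (fun _ => h.fst_mem) hG rfl (by simp) hJ hC]

end IsConstrainedMinimizer

end Minimizer

theorem minimizer_euler_lagrange_general {α₀ β₀ lam : ℝ} (hα : 0 ≤ α₀) (hβ : 0 ≤ β₀)
    (hlam : lam ≠ 0) {φ ψ : ℝ → ℝ} (h : IsConstrainedMinimizer α₀ β₀ lam φ ψ) :
    ContDiff ℝ 2 φ ∧ ContDiff ℝ 2 ψ ∧ ∃ κ : ℝ, ∀ x : ℝ,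
      -(deriv (deriv φ) x) + α₀ * φ x = κ * (φ x * ψ x) ∧
      -(deriv (deriv ψ) x) + β₀ * ψ x = (κ / 2) * φ x ^ 2 := by
  have hφ := h.fst_mem.continuous
  have hψ := h.snd_mem.continuous
  have htest {η : ℝ → ℝ} (hη : ContDiff ℝ ∞ η) (hηs : HasCompactSupport η) : InH1 η :=
    .of_contDiff_of_hasCompactSupport (by simp) hη hηs
  let κ := lagrangeMultiplier α₀ β₀ lam
  obtain ⟨hφ2, hφeq⟩ := h.fst_mem.contDiff_two_and_eq_of_weak (α := α₀)
    (N := fun x => κ * (φ x * ψ x)) (by fun_prop) fun η hη hηs => by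
      simp only [mul_assoc κ, integral_const_mul]
      exact h.h1Inner_fst hα hβ hlam (htest hη hηs)
  obtain ⟨hψ2, hψeq⟩ := h.snd_mem.contDiff_two_and_eq_of_weak (α := β₀)
    (N := fun x => κ / 2 * φ x ^ 2) (by fun_prop) fun ζ hζ hζs => by
      simp only [mul_assoc (κ / 2), integral_const_mul]
      exact h.h1Inner_snd hα hβ hlam (htest hζ hζs)
  exact ⟨hφ2, hψ2, κ, fun x => ⟨hφeq x, hψeq x⟩⟩

/-- a twice continuously differentiable minimizer satisfies the
Euler–Lagrange system for some Lagrange multiplier `κ`. -/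
theorem minimizer_euler_lagrange (α₀ β₀ lam : ℝ)
    (hα : 0 < α₀) (hβ : 0 < β₀) (hlam : 0 < lam)
    (φ ψ : ℝ → ℝ) (hφ : InH1 φ) (hψ : InH1 ψ)
    (hconstr : (∫ x : ℝ, φ x ^ 2 * ψ x) = lam)
    (hmin : Ifun α₀ β₀ φ ψ = Mfun α₀ β₀ lam)
    (hφC2 : ContDiff ℝ 2 φ) (hψC2 : ContDiff ℝ 2 ψ) :
    ∃ κ : ℝ, ∀ x : ℝ,
      -(deriv (deriv φ) x) + α₀ * φ x = κ * (φ x * ψ x) ∧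
      -(deriv (deriv ψ) x) + β₀ * ψ x = (κ / 2) * φ x ^ 2 :=
  (minimizer_euler_lagrange_general hα.le hβ.le hlam.ne' ⟨hφ, hψ, hconstr, hmin⟩).2.2
end
end

section
/- Let α₀ > 0, β₀ > 0 and λ > 0. Suppose (φ,ψ) ∈ H¹(ℝ)×H¹(ℝ) are twice continuously differentiable with φ(x), φ′(x), ψ(x), ψ′(x) → 0 as |x| → ∞, satisfy ∫_ℝ φ² ψ dx = λ and I(φ,ψ) = M_λ, and satisfy the Euler–Lagrange system −φ″ + α₀ φ = κ φ ψ, −ψ″ + β₀ ψ = (κ/2) φ² for some κ ∈ ℝ. Then κ = 2 M_λ / (3λ); in particular κ > 0. -/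
open MeasureTheory Filter Topology

noncomputable section

/-!
Testing the first Euler–Lagrange equation with `φ` and the second with `ψ` gives, after an
integration by parts on the line,
`∫ (φ'² + α₀ φ²) = κ ∫ φ² ψ` and `∫ (ψ'² + β₀ ψ²) = (κ / 2) ∫ φ² ψ`.
The sum of the left-hand sides is `I(φ,ψ)`, so `I(φ,ψ) = (3 / 2) κ λ`, and `I(φ,ψ) = M_λ` at a
minimizer. The left-hand side of the first identity is positive because `φ ≠ 0`, so `κ λ > 0`.
-/

section WeightedEnergy

/-- The one-component energy `∫ (u'² + c u²)`, for `c > 0` the square of a norm on `H¹(ℝ)`;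
`I(f,g)` is the sum of the energies of `f` with `c = α₀` and of `g` with `c = β₀`. -/
def weightedEnergy (c : ℝ) (u : ℝ → ℝ) : ℝ :=
  ∫ x, (deriv u x ^ 2 + c * u x ^ 2)

variable {u : ℝ → ℝ}

lemma InH1.integrable_deriv_sq_add_mul_sq (hu : InH1 u) (c : ℝ) :
    Integrable (fun x => deriv u x ^ 2 + c * u x ^ 2) :=
  hu.2.2.add (hu.2.1.const_mul c)

lemma InH1.integrable_mul_deriv (hu : InH1 u) : Integrable (fun x => u x * deriv u x) := by
  obtain ⟨hd, hi, hi'⟩ := hu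
  have hLp : MemLp u 2 :=
    (memLp_two_iff_integrable_sq hd.continuous.aestronglyMeasurable).2 hi
  have hLp' : MemLp (deriv u) 2 :=
    (memLp_two_iff_integrable_sq (stronglyMeasurable_deriv u).aestronglyMeasurable).2 hi'
  exact hLp.integrable_mul hLp'

lemma InH1.weightedEnergy_pos (hu : InH1 u) {c : ℝ} (hc : 0 < c) {x₀ : ℝ} (hx₀ : u x₀ ≠ 0) :
    0 < weightedEnergy c u := by
  obtain ⟨hd, hi, hi'⟩ := hu
  have hsq : 0 < ∫ x, u x ^ 2 :=
    integral_pos_of_integrable_nonneg_nonzero (hd.continuous.pow 2) hi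
      (fun x => sq_nonneg (u x)) (pow_ne_zero 2 hx₀)
  calc 0 < (∫ x, deriv u x ^ 2) + c * ∫ x, u x ^ 2 :=
        add_pos_of_nonneg_of_pos (integral_nonneg fun x => sq_nonneg (deriv u x))
          (mul_pos hc hsq)
    _ = weightedEnergy c u := by
        rw [weightedEnergy, integral_add hi' (hi.const_mul c), integral_const_mul]

lemma InH1.weightedEnergy_eq_integral_mul (hu : InH1 u) (hu' : Differentiable ℝ (deriv u))
    {c : ℝ} {F : ℝ → ℝ} (hF : Integrable (fun x => u x * F x))
    (heq : ∀ x, -deriv (deriv u) x + c * u x = F x) :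
    weightedEnergy c u = ∫ x, u x * F x := by
  have hderiv (x : ℝ) : HasDerivAt (fun y => u y * deriv u y)
      ((deriv u x ^ 2 + c * u x ^ 2) - u x * F x) x := by
    refine ((hu.1 x).hasDerivAt.mul (hu' x).hasDerivAt).congr_deriv ?_
    rw [← heq x]
    ring
  have hE := hu.integrable_deriv_sq_add_mul_sq c
  -- `u u'` and its derivative are both integrable, so `u u'` vanishes at `±∞`.
  have hzero : ∫ x, ((deriv u x ^ 2 + c * u x ^ 2) - u x * F x) = 0 :=
    integral_eq_zero_of_hasDerivAt_of_integrable hderiv (hE.sub hF) hu.integrable_mul_deriv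
  rwa [integral_sub hE hF, sub_eq_zero] at hzero

end WeightedEnergy

lemma Ifun_eq_weightedEnergy_add {f g : ℝ → ℝ} (hf : InH1 f) (hg : InH1 g) (α₀ β₀ : ℝ) :
    Ifun α₀ β₀ f g = weightedEnergy α₀ f + weightedEnergy β₀ g := by
  rw [Ifun, weightedEnergy, weightedEnergy, ← integral_add
    (hf.integrable_deriv_sq_add_mul_sq α₀) (hg.integrable_deriv_sq_add_mul_sq β₀)]
  congr with x
  ring

theorem lagrange_multiplier_value_general {α₀ β₀ lam κ : ℝ} (hα : 0 < α₀) (hlam : lam ≠ 0)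
    {φ ψ : ℝ → ℝ} (hφ : InH1 φ) (hψ : InH1 ψ)
    (hφ' : Differentiable ℝ (deriv φ)) (hψ' : Differentiable ℝ (deriv ψ))
    (hconstr : ∫ x, φ x ^ 2 * ψ x = lam)
    (hEL1 : ∀ x, -deriv (deriv φ) x + α₀ * φ x = κ * (φ x * ψ x))
    (hEL2 : ∀ x, -deriv (deriv ψ) x + β₀ * ψ x = (κ / 2) * φ x ^ 2) :
    κ = 2 * Ifun α₀ β₀ φ ψ / (3 * lam) ∧ 0 < κ * lam := by
  have hint_ne : ∫ x, φ x ^ 2 * ψ x ≠ 0 := hconstr ▸ hlam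
  have hcubic : Integrable (fun x => φ x ^ 2 * ψ x) := .of_integral_ne_zero hint_ne
  have hφF (x : ℝ) : φ x * (κ * (φ x * ψ x)) = κ * (φ x ^ 2 * ψ x) := by ring
  have hψF (x : ℝ) : ψ x * ((κ / 2) * φ x ^ 2) = κ / 2 * (φ x ^ 2 * ψ x) := by ring
  have hEφ : weightedEnergy α₀ φ = κ * lam := by
    rw [hφ.weightedEnergy_eq_integral_mul hφ' (by simpa only [hφF] using hcubic.const_mul κ) hEL1]
    simp only [hφF, integral_const_mul, hconstr]
  have hEψ : weightedEnergy β₀ ψ = κ / 2 * lam := by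
    rw [hψ.weightedEnergy_eq_integral_mul hψ'
      (by simpa only [hψF] using hcubic.const_mul (κ / 2)) hEL2]
    simp only [hψF, integral_const_mul, hconstr]
  obtain ⟨x₀, hx₀⟩ := exists_ne_zero_of_integral_ne_zero hint_ne
  have hφx₀ : φ x₀ ≠ 0 := fun h => hx₀ (by simp [h])
  refine ⟨?_, hEφ ▸ hφ.weightedEnergy_pos hα hφx₀⟩
  rw [Ifun_eq_weightedEnergy_add hφ hψ, hEφ, hEψ]
  field_simp
  ring

/-- for a decaying C² minimizer satisfying the Euler–Lagrange system
with multiplier `κ`, the multiplier equals `2 M_λ / (3λ)`; in particular `κ > 0`. -/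
theorem lagrange_multiplier_value (α₀ β₀ lam : ℝ)
    (hα : 0 < α₀) (hβ : 0 < β₀) (hlam : 0 < lam)
    (φ ψ : ℝ → ℝ) (hφ : InH1 φ) (hψ : InH1 ψ)
    (hφC2 : ContDiff ℝ 2 φ) (hψC2 : ContDiff ℝ 2 ψ)
    (hφ0 : Tendsto φ (cocompact ℝ) (𝓝 0)) (hφ'0 : Tendsto (deriv φ) (cocompact ℝ) (𝓝 0))
    (hψ0 : Tendsto ψ (cocompact ℝ) (𝓝 0)) (hψ'0 : Tendsto (deriv ψ) (cocompact ℝ) (𝓝 0))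
    (hconstr : (∫ x : ℝ, φ x ^ 2 * ψ x) = lam)
    (hmin : Ifun α₀ β₀ φ ψ = Mfun α₀ β₀ lam)
    (κ : ℝ)
    (hEL1 : ∀ x : ℝ, -(deriv (deriv φ) x) + α₀ * φ x = κ * (φ x * ψ x))
    (hEL2 : ∀ x : ℝ, -(deriv (deriv ψ) x) + β₀ * ψ x = (κ / 2) * φ x ^ 2) :
    κ = 2 * Mfun α₀ β₀ lam / (3 * lam) ∧ 0 < κ := by
  have ⟨hκ, hpos⟩ := lagrange_multiplier_value_general hα hlam.ne' hφ hψ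
    hφC2.differentiable_deriv_two hψC2.differentiable_deriv_two hconstr hEL1 hEL2
  exact ⟨hmin ▸ hκ, pos_of_mul_pos_left hpos hlam.le⟩
end
end
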